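/- (Theorem 5 of the paper.) Let m ≥ 1, d = 2m, let J = [[0, I_m], [−I_m, 0]], let H : ℝ^d → ℝ be C^∞, and let y : [0, h₀] → ℝ^d solve y' = J∇H(y), y(0) = y₀. Let s > ν ≥ 1, k ≥ s, and let (c_ℓ, b_ℓ)_{ℓ=1}^k be a quadrature on [0,1] exact for polynomials of degree ≤ 2k−1. Suppose that for each h ∈ (0, h₀] there is a polynomial map u_h : [0,h] → ℝ^d of degree ≤ s, with u_h(0) = y₀ and range in a fixed compact set, satisfying u_h'(ch) = Σ_{j=0}^{s−1} P_j(c) η̂_j(h) γ̂_j(h) for c ∈ [0,1], where γ̂_j(h) = Σ_{ℓ=1}^k b_ℓ P_j(c_ℓ) J∇H(u_h(c_ℓ h)), η̂_j(h) = 1 for j ≤ s−ν−1 and η̂_j(h) = 1 − h^{2(s−1−j)} α̂_j(h) for s−ν ≤ j ≤ s−1, with each α̂_j(h) = O(h²). Then ‖u_h(h) − y(h)‖ = O(h^{2s+1}) as h → 0⁺; i.e., the method has order 2s. -/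

import Mathlib

open MeasureTheory Polynomial Matrix

/-- The shifted Legendre polynomial `P j`, orthonormal on `[0,1]`. -/
noncomputable def legP (j : ℕ) : ℝ → ℝ := fun x =>
  (Real.sqrt (2 * j + 1) / (Nat.factorial j)) *
    (Polynomial.derivative^[j] ((Polynomial.X ^ 2 - Polynomial.X) ^ j)).eval x

/-- The phase space `ℝ^{2m}`, with coordinates indexed by `Fin m ⊕ Fin m`. -/
abbrev ESp (m : ℕ) := EuclideanSpace ℝ (Fin m ⊕ Fin m)

/-- The canonical skew-symmetric matrix `J = [[0, I_m], [-I_m, 0]]`. -/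
noncomputable def Jmat (m : ℕ) : Matrix (Fin m ⊕ Fin m) (Fin m ⊕ Fin m) ℝ :=
  Matrix.fromBlocks 0 1 (-1) 0

/-!
On the rescaled interval `x = t / h ∈ [0, 1]`, the method solves the differential equation up to a
residual `δ`. A bootstrap on the derivatives of the numerical solution shows that the vector field
along it is within `O(h ^ n)` of polynomials of degree `< n`, for every `n`. Hence its Legendre
coefficients decay like `γ̂_j = O(h ^ j)` for `j < s`, the damping `1 - η̂_j = O(h ^ (2 * (s - j)))`
perturbs the `j`-th term by `O(h ^ (2 * s - j))` only, and `δ = O(h ^ s)`, while its moments against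
`P_i`, `i < s`, are `O(h ^ (2 * s - i))`: the residual is nearly orthogonal to low degrees.

Let `Z` be the resolvent of the adjoint linearised equation along the exact solution. Variation of
constants gives `Z(h) (u_h(h) - y(h)) = h ∫₀¹ Z(x h) (δ(x) + O(h ^ (2 * s + 2))) dx`. Expanding the
smooth `Z(x h)` in powers of `x h`, its `i`-th Taylor coefficient contributes `h ^ i` times an
`O(h ^ (2 * s - i))` moment and the remainder is `O(h ^ s)` against `δ = O(h ^ s)`, so the integral
is `O(h ^ (2 * s))`.
-/

section Legendre

lemma integral_derivative_eval (p : ℝ[X]) :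
    ∫ x in (0 : ℝ)..1, (derivative p).eval x = p.eval 1 - p.eval 0 :=
  intervalIntegral.integral_eq_sub_of_hasDerivAt (fun x _ => p.hasDerivAt x)
    (p.derivative.continuous.intervalIntegrable _ _)

lemma integral_derivative_mul_eval (p q : ℝ[X]) (h₀ : (p * q).eval 0 = 0)
    (h₁ : (p * q).eval 1 = 0) :
    ∫ x in (0 : ℝ)..1, (derivative p * q).eval x
      = -∫ x in (0 : ℝ)..1, (p * derivative q).eval x := by
  have h := integral_derivative_eval (p * q)
  simp only [derivative_mul, eval_add, h₀, h₁, sub_zero] at h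
  rw [intervalIntegral.integral_add ((derivative p * q).continuous.intervalIntegrable _ _)
    ((p * derivative q).continuous.intervalIntegrable _ _)] at h
  exact eq_neg_of_add_eq_zero_left h

lemma eval_iterate_derivative_pow_eq_zero {R : Type*} [CommRing R] {p : R[X]} {x : R}
    (hx : p.eval x = 0) {i j : ℕ} (hij : i < j) : (derivative^[i] (p ^ j)).eval x = 0 := by
  have hdvd : p ∣ derivative^[i] (p ^ j) :=
    (dvd_pow_self p (by omega)).trans (pow_sub_dvd_iterate_derivative_of_pow_dvd i dvd_rfl)
  exact eval_eq_zero_of_dvd_of_eval_eq_zero hdvd hx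

lemma integral_iterate_derivative_pow_mul {w : ℝ[X]} (hw₀ : w.eval 0 = 0) (hw₁ : w.eval 1 = 0)
    (q : ℝ[X]) {i j : ℕ} (hij : i ≤ j) :
    ∫ x in (0 : ℝ)..1, (derivative^[i] (w ^ j) * q).eval x
      = (-1) ^ i * ∫ x in (0 : ℝ)..1, (w ^ j * derivative^[i] q).eval x := by
  induction i generalizing q with
  | zero => simp
  | succ i ih =>
    have h₀ := eval_iterate_derivative_pow_eq_zero hw₀ hij
    have h₁ := eval_iterate_derivative_pow_eq_zero hw₁ hij
    rw [Function.iterate_succ_apply',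
      integral_derivative_mul_eval _ _ (by rw [eval_mul, h₀, zero_mul])
        (by rw [eval_mul, h₁, zero_mul]),
      ih _ (Nat.le_of_succ_le hij), Function.iterate_succ_apply]
    ring

lemma integral_X_pow_mul_X_sub_one_pow (a b : ℕ) :
    ∫ x in (0 : ℝ)..1, (X ^ a * (X - 1) ^ b : ℝ[X]).eval x
      = (-1) ^ b * (a.factorial * b.factorial / (a + b + 1).factorial) := by
  induction b generalizing a with
  | zero =>
    have hmonomial : ∫ x in (0 : ℝ)..1, (X ^ a * (X - 1) ^ 0 : ℝ[X]).eval x = 1 / (a + 1) := by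
      simp
    rw [hmonomial, add_zero, Nat.factorial_succ, Nat.factorial_zero]
    push_cast
    field_simp
  | succ b ih =>
    have hparts := integral_derivative_mul_eval (X ^ (a + 1)) ((X - 1) ^ (b + 1))
      (by simp) (by simp)
    have hp : derivative (X ^ (a + 1)) * (X - 1) ^ (b + 1)
        = C (a + 1 : ℝ) * (X ^ a * (X - 1) ^ (b + 1)) := by
      simp only [derivative_X_pow_succ, map_add, map_natCast, map_one]
      ring
    have hq : X ^ (a + 1) * derivative ((X - 1) ^ (b + 1))
        = C (b + 1 : ℝ) * (X ^ (a + 1) * (X - 1) ^ b) := by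
      simp only [derivative_pow, Nat.cast_add, Nat.cast_one, map_add, map_natCast, map_one,
        add_tsub_cancel_right, derivative_sub, derivative_X, derivative_one, sub_zero, mul_one]
      ring
    rw [hp, hq] at hparts
    simp only [eval_C_mul, intervalIntegral.integral_const_mul] at hparts
    rw [ih, Nat.add_right_comm a 1 b, Nat.factorial_succ a] at hparts
    refine mul_left_cancel₀ (Nat.cast_add_one_ne_zero a) (hparts.trans ?_)
    rw [Nat.factorial_succ b, ← Nat.add_assoc]
    push_cast
    field_simp
    ring

lemma monic_X_sq_sub_X_pow (j : ℕ) : ((X ^ 2 - X : ℝ[X]) ^ j).Monic :=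
  (monic_X_pow_sub (by simp)).pow j

lemma natDegree_X_sq_sub_X_pow (j : ℕ) : ((X ^ 2 - X : ℝ[X]) ^ j).natDegree = 2 * j := by
  have h : (X ^ 2 - X : ℝ[X]).natDegree = 2 := by compute_degree!
  rw [natDegree_pow, h, mul_comm]

lemma iterate_derivative_eq_C_factorial {R : Type*} [Semiring R] {p : R[X]} (hp : p.Monic) :
    derivative^[p.natDegree] p = C (p.natDegree.factorial : R) := by
  have hdeg := natDegree_iterate_derivative p p.natDegree
  rw [eq_C_of_natDegree_le_zero (hdeg.trans (Nat.sub_self _).le), coeff_iterate_derivative,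
    zero_add, hp.coeff_natDegree, Nat.descFactorial_self, nsmul_one]

/-- The shifted Legendre polynomial `legP j` as an element of `ℝ[X]`. -/
noncomputable def legPoly (j : ℕ) : ℝ[X] :=
  C (√(2 * j + 1) / j.factorial) * derivative^[j] ((X ^ 2 - X) ^ j)

lemma legP_eq_eval (j : ℕ) (x : ℝ) : legP j x = (legPoly j).eval x := by
  simp [legP, legPoly]

@[fun_prop]
lemma continuous_legP (j : ℕ) : Continuous (legP j) := by
  simpa only [funext (legP_eq_eval j)] using (legPoly j).continuous

lemma integral_legP_mul_eval (j : ℕ) (q : ℝ[X]) :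
    ∫ x in (0 : ℝ)..1, legP j x * q.eval x = √(2 * j + 1) / j.factorial *
      ((-1) ^ j * ∫ x in (0 : ℝ)..1, ((X ^ 2 - X) ^ j * derivative^[j] q).eval x) := by
  rw [← integral_iterate_derivative_pow_mul (by simp) (by simp) q le_rfl,
    ← intervalIntegral.integral_const_mul]
  simp only [legP, eval_mul, mul_assoc]

lemma integral_legP_mul_eval_eq_zero {j : ℕ} {q : ℝ[X]} (hq : q.natDegree < j) :
    ∫ x in (0 : ℝ)..1, legP j x * q.eval x = 0 := by
  simp [integral_legP_mul_eval, iterate_derivative_eq_zero hq]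

lemma integral_legP_mul_self (j : ℕ) : ∫ x in (0 : ℝ)..1, legP j x * legP j x = 1 := by
  have hderiv : derivative^[j] (legPoly j)
      = C (√(2 * j + 1) / j.factorial * (2 * j).factorial) := by
    have h := iterate_derivative_eq_C_factorial (monic_X_sq_sub_X_pow j)
    rw [natDegree_X_sq_sub_X_pow] at h
    rw [legPoly, iterate_derivative_C_mul, ← Function.iterate_add_apply, ← two_mul, h, C_mul]
  have hbeta : ∫ x in (0 : ℝ)..1, ((X ^ 2 - X : ℝ[X]) ^ j).eval x
      = (-1) ^ j * (j.factorial * j.factorial / (2 * j + 1).factorial) := by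
    rw [two_mul, ← integral_X_pow_mul_X_sub_one_pow, ← mul_pow]
    ring_nf
  have hsqrt : √(2 * j + 1) ^ 2 = (2 * j + 1 : ℝ) := Real.sq_sqrt (by positivity)
  have hsign : ((-1 : ℝ) ^ j) ^ 2 = 1 := by rw [← pow_mul, mul_comm, pow_mul]; simp
  calc ∫ x in (0 : ℝ)..1, legP j x * legP j x
      = ∫ x in (0 : ℝ)..1, legP j x * (legPoly j).eval x := by simp only [legP_eq_eval]
    _ = (√(2 * j + 1) ^ 2 * ((-1) ^ j) ^ 2) * ((2 * j).factorial / (2 * j + 1).factorial) := by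
        rw [integral_legP_mul_eval, hderiv]
        simp only [eval_mul, eval_C, intervalIntegral.integral_mul_const] at hbeta ⊢
        rw [hbeta]
        field_simp
    _ = 1 := by
        rw [hsqrt, hsign, Nat.factorial_succ]
        push_cast
        field_simp

lemma legPoly_ne_zero (j : ℕ) : legPoly j ≠ 0 := fun h => by
  simpa [legP_eq_eval, h] using integral_legP_mul_self j

lemma degree_legPoly (j : ℕ) : (legPoly j).degree = j := by
  have hle : (legPoly j).natDegree ≤ j := by
    have h := natDegree_iterate_derivative ((X ^ 2 - X : ℝ[X]) ^ j) j
    rw [natDegree_X_sq_sub_X_pow] at h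
    exact (natDegree_C_mul_le _ _).trans (by omega)
  have hge : ¬(legPoly j).natDegree < j := fun h => by
    have h0 := integral_legP_mul_eval_eq_zero h
    simp only [← legP_eq_eval, integral_legP_mul_self, one_ne_zero] at h0
  rw [degree_eq_natDegree (legPoly_ne_zero j), le_antisymm hle (not_lt.mp hge)]

lemma natDegree_legPoly (j : ℕ) : (legPoly j).natDegree = j :=
  natDegree_eq_of_degree_eq_some (degree_legPoly j)

lemma integral_legP_mul_legP (i j : ℕ) :
    ∫ x in (0 : ℝ)..1, legP i x * legP j x = if i = j then 1 else 0 := by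
  wlog hij : i ≤ j generalizing i j
  · simpa only [mul_comm, eq_comm] using this j i (le_of_not_ge hij)
  obtain rfl | hlt := hij.eq_or_lt
  · simp [integral_legP_mul_self]
  · rw [if_neg hlt.ne]
    simpa only [legP_eq_eval, mul_comm] using
      integral_legP_mul_eval_eq_zero ((natDegree_legPoly i).trans_lt hlt)

lemma span_legPoly (s : ℕ) : Submodule.span ℝ (legPoly '' Set.Iio s) = degreeLT ℝ s :=
  Sequence.span_degreeLT ⟨legPoly, degree_legPoly⟩ fun i _ =>
    (leadingCoeff_ne_zero.mpr (legPoly_ne_zero i)).isUnit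

lemma sum_legP_mul_integral {s : ℕ} {q : ℝ[X]} (hq : q.degree < s) (x : ℝ) :
    ∑ j ∈ Finset.range s, legP j x * ∫ z in (0 : ℝ)..1, legP j z * q.eval z = q.eval x := by
  rw [← mem_degreeLT, ← span_legPoly] at hq
  induction hq using Submodule.span_induction with
  | mem q hq =>
    obtain ⟨i, hi, rfl⟩ := hq
    simp [← legP_eq_eval, integral_legP_mul_legP, Set.mem_Iio.mp hi]
  | zero => simp
  | add p q _ _ hp hq =>
    have hint (p : ℝ[X]) (j : ℕ) : IntervalIntegrable (fun z => legP j z * p.eval z) volume 0 1 :=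
      ((continuous_legP j).mul p.continuous).intervalIntegrable _ _
    simp only [eval_add, mul_add, intervalIntegral.integral_add (hint p _) (hint q _),
      Finset.sum_add_distrib, hp, hq]
  | smul r p _ hp =>
    simp only [eval_smul, smul_eq_mul, mul_left_comm _ r, intervalIntegral.integral_const_mul,
      ← Finset.mul_sum, hp]

end Legendre

section VectorPolynomials

open Finset

variable {E : Type*} [NormedAddCommGroup E] [NormedSpace ℝ E]

/-- The `E`-valued polynomial of degree `< n` with coefficients `a`, as a function. -/
def vecPoly (n : ℕ) (a : ℕ → E) (x : ℝ) : E := ∑ i ∈ range n, x ^ i • a i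

@[fun_prop]
lemma continuous_vecPoly (n : ℕ) (a : ℕ → E) : Continuous (vecPoly n a) := by
  unfold vecPoly
  fun_prop

variable {ι : Type*} [Fintype ι]

/-- The quadrature with nodes `c` and weights `b` on `[0, 1]` is exact for polynomials of degree
`< N`; with a strict bound, `N = 0` imposes nothing. -/
def IsExactQuadrature (c b : ι → ℝ) (N : ℕ) : Prop :=
  ∀ q : ℝ[X], q.natDegree < N → ∑ ℓ, b ℓ * q.eval (c ℓ) = ∫ x in (0 : ℝ)..1, q.eval x

/-- The quadrature approximation `γ̂_j` of the Legendre coefficient `∫₀¹ P_j G`. -/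
noncomputable def legendreCoeff (c b : ι → ℝ) (G : ℝ → E) (j : ℕ) : E :=
  ∑ ℓ, (b ℓ * legP j (c ℓ)) • G (c ℓ)

/-- The truncated Legendre series `∑_{j < s} P_j(x) w_j γ̂_j` of `G`, with damping factors `w`:
the right-hand side of the method for the factors `w_j = η̂_j(h)`. -/
noncomputable def legendreField (s : ℕ) (c b : ι → ℝ) (w : ℕ → ℝ) (G : ℝ → E) (x : ℝ) : E :=
  ∑ j ∈ range s, legP j x • w j • legendreCoeff c b G j

@[fun_prop]
lemma continuous_legendreField (s : ℕ) (c b : ι → ℝ) (w : ℕ → ℝ) (G : ℝ → E) :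
    Continuous (legendreField s c b w G) := by
  unfold legendreField
  fun_prop

lemma legendreCoeff_sub (c b : ι → ℝ) (G₁ G₂ : ℝ → E) (j : ℕ) :
    legendreCoeff c b (fun x => G₁ x - G₂ x) j
      = legendreCoeff c b G₁ j - legendreCoeff c b G₂ j := by
  simp only [legendreCoeff, smul_sub, sum_sub_distrib]

variable [CompleteSpace E]

lemma integral_smul_vecPoly {g : ℝ → ℝ} (hg : Continuous g) (n : ℕ) (a : ℕ → E) :
    ∫ x in (0 : ℝ)..1, g x • vecPoly n a x
      = ∑ i ∈ range n, (∫ x in (0 : ℝ)..1, g x * x ^ i) • a i := by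
  simp only [vecPoly, smul_sum, smul_smul]
  rw [intervalIntegral.integral_finsetSum fun i _ =>
    Continuous.intervalIntegrable (by fun_prop) _ _]
  simp only [intervalIntegral.integral_smul_const]

lemma integral_legP_smul_vecPoly_eq_zero {n j : ℕ} (hnj : n ≤ j) (a : ℕ → E) :
    ∫ x in (0 : ℝ)..1, legP j x • vecPoly n a x = 0 := by
  rw [integral_smul_vecPoly (continuous_legP j)]
  refine sum_eq_zero fun i hi => ?_
  have horth := integral_legP_mul_eval_eq_zero (j := j) (q := X ^ i)
    (by simpa using (mem_range.mp hi).trans_le hnj)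
  simp only [eval_pow, eval_X] at horth
  rw [horth, zero_smul]

lemma sum_legP_smul_integral_vecPoly (s : ℕ) (a : ℕ → E) (x : ℝ) :
    ∑ j ∈ range s, legP j x • ∫ z in (0 : ℝ)..1, legP j z • vecPoly s a z = vecPoly s a x := by
  simp only [integral_smul_vecPoly (continuous_legP _), smul_sum, smul_smul]
  rw [sum_comm, vecPoly]
  refine sum_congr rfl fun i hi => ?_
  have hrepr := sum_legP_mul_integral (q := X ^ i) (s := s)
    (by rw [degree_X_pow]; exact_mod_cast mem_range.mp hi) x
  simp only [eval_pow, eval_X] at hrepr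
  rw [← sum_smul, hrepr]

lemma IsExactQuadrature.legendreCoeff_vecPoly {c b : ι → ℝ} {N : ℕ}
    (hquad : IsExactQuadrature c b N) {j n : ℕ} (hjn : j + n ≤ N) (a : ℕ → E) :
    legendreCoeff c b (vecPoly n a) j = ∫ x in (0 : ℝ)..1, legP j x • vecPoly n a x := by
  rw [integral_smul_vecPoly (continuous_legP j)]
  simp only [legendreCoeff, vecPoly, smul_sum, smul_smul]
  rw [sum_comm]
  refine sum_congr rfl fun i hi => ?_
  have hexact := hquad (legPoly j * X ^ i) (by
    rw [natDegree_mul_X_pow _ (legPoly_ne_zero j), natDegree_legPoly]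
    have := mem_range.mp hi
    omega)
  simp only [eval_mul, eval_pow, eval_X, ← legP_eq_eval] at hexact
  simp only [← sum_smul, mul_assoc, hexact]

lemma IsExactQuadrature.legendreField_vecPoly {c b : ι → ℝ} {s : ℕ}
    (hquad : IsExactQuadrature c b (2 * s)) (a : ℕ → E) (x : ℝ) :
    legendreField s c b 1 (vecPoly s a) x = vecPoly s a x := by
  rw [← sum_legP_smul_integral_vecPoly, legendreField]
  refine sum_congr rfl fun j hj => ?_
  have := mem_range.mp hj
  rw [Pi.one_apply, one_smul, hquad.legendreCoeff_vecPoly (by omega)]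

lemma integral_legP_smul_legendreField {i s : ℕ} (hi : i < s) (c b : ι → ℝ) (w : ℕ → ℝ)
    (G : ℝ → E) :
    ∫ x in (0 : ℝ)..1, legP i x • legendreField s c b w G x = w i • legendreCoeff c b G i := by
  simp only [legendreField, smul_sum, smul_smul (legP i _)]
  rw [intervalIntegral.integral_finsetSum fun j _ =>
    Continuous.intervalIntegrable (by fun_prop) _ _]
  simp [intervalIntegral.integral_smul_const, integral_legP_mul_legP, hi]

end VectorPolynomials

section UniformEstimates

open Set Filter Topology Asymptotics

variable {E : Type*} [NormedAddCommGroup E]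

/-- Step sizes `h → 0⁺` together with an unrestricted `x ∈ [0, 1]`: a bound along this filter is
a bound for small `h` uniform in `x`. -/
abbrev stepFilter : Filter (ℝ × ℝ) := 𝓝[>] 0 ×ˢ 𝓟 (Icc 0 1)

lemma eventually_stepFilter {P : ℝ × ℝ → Prop} :
    (∀ᶠ p in stepFilter, P p) ↔ ∀ᶠ h in 𝓝[>] (0 : ℝ), ∀ x ∈ Icc (0 : ℝ) 1, P (h, x) :=
  eventually_prod_principal_iff

lemma tendsto_prodMk_stepFilter {x : ℝ} (hx : x ∈ Icc (0 : ℝ) 1) :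
    Tendsto (fun h : ℝ => (h, x)) (𝓝[>] 0) stepFilter :=
  tendsto_id.prodMk (tendsto_principal.mpr (Eventually.of_forall fun _ => hx))

lemma isBigO_stepFilter_iff {F : ℝ × ℝ → E} {g : ℝ → ℝ} :
    (F =O[stepFilter] fun p => g p.1) ↔
      ∃ C, ∀ᶠ h in 𝓝[>] (0 : ℝ), ∀ x ∈ Icc (0 : ℝ) 1, ‖F (h, x)‖ ≤ C * ‖g h‖ := by
  simp only [isBigO_iff, eventually_stepFilter]

lemma isBigO_snd_one {φ : ℝ → E} (hφ : ContinuousOn φ (Icc 0 1)) :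
    (fun p : ℝ × ℝ => φ p.2) =O[stepFilter] fun _ => (1 : ℝ) := by
  obtain ⟨M, hM⟩ := isCompact_Icc.exists_bound_of_continuousOn hφ
  exact .of_bound M (eventually_stepFilter.mpr (.of_forall fun _ x hx => by simpa using hM x hx))

lemma isBigO_pow_pow_nhdsGT {m n : ℕ} (hmn : m ≤ n) :
    (fun h : ℝ => h ^ n) =O[𝓝[>] 0] fun h => h ^ m :=
  IsBigO.of_bound 1 <| by
    filter_upwards [Ioc_mem_nhdsGT zero_lt_one] with h hh
    rw [one_mul, norm_pow, norm_pow, Real.norm_of_nonneg hh.1.le]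
    exact pow_le_pow_of_le_one hh.1.le hh.2 hmn

lemma exists_eventually_norm_le_mul_pow {R : ℕ → ℝ × ℝ → E} {n : ℕ}
    (hR : ∀ i, 1 ≤ i → i ≤ n → R i =O[stepFilter] fun p => p.1 ^ i) :
    ∃ D, ∀ᶠ h in 𝓝[>] (0 : ℝ), ∀ i, 1 ≤ i → i ≤ n → ∀ x ∈ Icc (0 : ℝ) 1,
      ‖R i (h, x)‖ ≤ (D * h) ^ i := by
  have hbound (i : ℕ) (h₁ : 1 ≤ i) (h₂ : i ≤ n) :=
    (isBigO_stepFilter_iff (g := fun h => h ^ i)).mp (hR i h₁ h₂)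
  choose! A hA using hbound
  obtain ⟨D, hD⟩ := ((Finset.Icc 1 n).image A).bddAbove
  have hA_all : ∀ᶠ h in 𝓝[>] (0 : ℝ), ∀ i ∈ Finset.Icc 1 n, ∀ x ∈ Icc (0 : ℝ) 1,
      ‖R i (h, x)‖ ≤ A i * ‖h ^ i‖ :=
    (Finset.eventually_all _).mpr fun i hi =>
      hA i (Finset.mem_Icc.mp hi).1 (Finset.mem_Icc.mp hi).2
  refine ⟨max D 1, ?_⟩
  filter_upwards [hA_all, self_mem_nhdsWithin] with h hAh (hpos : 0 < h) i hi₁ hi₂ x hx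
  have hmem := Finset.mem_Icc.mpr ⟨hi₁, hi₂⟩
  have hAD : A i ≤ max D 1 ^ i :=
    (hD (Finset.mem_image_of_mem A hmem)).trans <|
      (le_max_left D 1).trans (le_self_pow₀ (le_max_right D 1) (by omega))
  calc ‖R i (h, x)‖ ≤ A i * ‖h ^ i‖ := hAh i hmem x hx
    _ = A i * h ^ i := by rw [Real.norm_of_nonneg (by positivity)]
    _ ≤ (max D 1 * h) ^ i := by rw [mul_pow]; gcongr

variable [NormedSpace ℝ E]

lemma isBigO_integral {F : ℝ × ℝ → E} {g : ℝ → ℝ} (hF : F =O[stepFilter] fun p => g p.1) :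
    (fun h => ∫ x in (0 : ℝ)..1, F (h, x)) =O[𝓝[>] 0] g := by
  obtain ⟨C, hC⟩ := isBigO_stepFilter_iff.mp hF
  refine IsBigO.of_bound C ?_
  filter_upwards [hC] with h hh
  simpa using intervalIntegral.norm_integral_le_of_norm_le_const (a := 0) (b := 1)
    (f := fun x => F (h, x)) (C := C * ‖g h‖) fun x hx =>
      hh x (Ioc_subset_Icc_self (by rwa [uIoc_of_le zero_le_one] at hx))

/-- On `[0, 1]`, the functions `G h` agree with polynomials of degree `< n` up to a uniform
`O(h ^ n)`. -/
def HasPolyApprox (G : ℝ → ℝ → E) (n : ℕ) : Prop :=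
  ∃ a : ℝ → ℕ → E,
    (fun p : ℝ × ℝ => G p.1 p.2 - vecPoly n (a p.1) p.2) =O[stepFilter] fun p => p.1 ^ n

variable {ι : Type*} [Fintype ι] {c b : ι → ℝ} {G : ℝ → ℝ → E}

lemma isBigO_legendreCoeff_of_isBigO (hc : ∀ ℓ, c ℓ ∈ Icc (0 : ℝ) 1) (b : ι → ℝ) {g : ℝ → ℝ}
    (hG : (fun p : ℝ × ℝ => G p.1 p.2) =O[stepFilter] fun p => g p.1) (j : ℕ) :
    (fun h => legendreCoeff c b (G h) j) =O[𝓝[>] 0] g := by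
  unfold legendreCoeff
  exact IsBigO.fun_sum fun ℓ _ =>
    (hG.comp_tendsto (tendsto_prodMk_stepFilter (hc ℓ))).const_smul_left _

lemma isBigO_smul_of_continuous {φ : ℝ → ℝ} (hφ : Continuous φ) {W : ℝ → E} {g : ℝ → ℝ}
    (hW : W =O[𝓝[>] 0] g) :
    (fun p : ℝ × ℝ => φ p.2 • W p.1) =O[stepFilter] fun p => g p.1 := by
  simpa using (isBigO_snd_one hφ.continuousOn).smul (hW.comp_tendsto tendsto_fst)

lemma isBigO_sum_legP_smul {s : ℕ} {W : ℝ → ℕ → E} {g : ℝ → ℝ}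
    (hW : ∀ j < s, (fun h => W h j) =O[𝓝[>] 0] g) :
    (fun p : ℝ × ℝ => ∑ j ∈ Finset.range s, legP j p.2 • W p.1 j) =O[stepFilter]
      fun p => g p.1 :=
  IsBigO.fun_sum fun j hj =>
    isBigO_smul_of_continuous (continuous_legP j) (hW j (Finset.mem_range.mp hj))

variable [CompleteSpace E]

lemma HasPolyApprox.isBigO_legendreCoeff_sub_integral {n N j : ℕ} (hG : HasPolyApprox G n)
    (hGc : ∀ᶠ h in 𝓝[>] (0 : ℝ), ContinuousOn (G h) (Icc 0 1)) (hc : ∀ ℓ, c ℓ ∈ Icc (0 : ℝ) 1)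
    (hquad : IsExactQuadrature c b N) (hjn : j + n ≤ N) :
    (fun h => legendreCoeff c b (G h) j - ∫ x in (0 : ℝ)..1, legP j x • G h x)
      =O[𝓝[>] 0] fun h => h ^ n := by
  obtain ⟨a, ha⟩ := hG
  have hcoeff := isBigO_legendreCoeff_of_isBigO (G := fun h x => G h x - vecPoly n (a h) x)
    (g := fun h => h ^ n) hc b ha j
  have hint : (fun h => ∫ x in (0 : ℝ)..1, legP j x • (G h x - vecPoly n (a h) x))
      =O[𝓝[>] 0] fun h => h ^ n :=
    isBigO_integral (F := fun p => legP j p.2 • (G p.1 p.2 - vecPoly n (a p.1) p.2)) <| by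
      simpa using (isBigO_snd_one (continuous_legP j).continuousOn).smul ha
  refine (hcoeff.sub hint).congr' ?_ EventuallyEq.rfl
  filter_upwards [hGc] with h hGh
  have hG_int : IntervalIntegrable (fun x => legP j x • G h x) volume 0 1 :=
    ((continuous_legP j).continuousOn.smul hGh).intervalIntegrable_of_Icc zero_le_one
  have hv_int : IntervalIntegrable (fun x => legP j x • vecPoly n (a h) x) volume 0 1 :=
    Continuous.intervalIntegrable (by fun_prop) _ _
  simp only [legendreCoeff_sub, smul_sub]
  rw [intervalIntegral.integral_sub hG_int hv_int, hquad.legendreCoeff_vecPoly hjn]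
  abel

lemma HasPolyApprox.isBigO_legendreCoeff {n N j : ℕ} (hG : HasPolyApprox G n)
    (hc : ∀ ℓ, c ℓ ∈ Icc (0 : ℝ) 1) (hquad : IsExactQuadrature c b N) (hnj : n ≤ j)
    (hjn : j + n ≤ N) :
    (fun h => legendreCoeff c b (G h) j) =O[𝓝[>] 0] fun h => h ^ n := by
  obtain ⟨a, ha⟩ := hG
  refine (isBigO_legendreCoeff_of_isBigO (G := fun h x => G h x - vecPoly n (a h) x)
    (g := fun h => h ^ n) hc b ha j).congr_left fun h => ?_
  rw [legendreCoeff_sub, hquad.legendreCoeff_vecPoly hjn,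
    integral_legP_smul_vecPoly_eq_zero hnj, sub_zero]

lemma HasPolyApprox.isBigO_legendreField_one_sub {s : ℕ} (hG : HasPolyApprox G s)
    (hc : ∀ ℓ, c ℓ ∈ Icc (0 : ℝ) 1) (hquad : IsExactQuadrature c b (2 * s)) :
    (fun p : ℝ × ℝ => legendreField s c b 1 (G p.1) p.2 - G p.1 p.2) =O[stepFilter]
      fun p => p.1 ^ s := by
  obtain ⟨a, ha⟩ := hG
  have hsum := isBigO_sum_legP_smul (s := s) fun j _ => isBigO_legendreCoeff_of_isBigO
    (G := fun h x => G h x - vecPoly s (a h) x) (g := fun h => h ^ s) hc b ha j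
  refine (hsum.sub ha).congr_left fun p => ?_
  have hfix := hquad.legendreField_vecPoly (a p.1) p.2
  simp only [legendreField, Pi.one_apply, one_smul] at hfix ⊢
  simp only [legendreCoeff_sub, smul_sub, Finset.sum_sub_distrib, hfix]
  abel

section Damping

variable {s : ℕ} {η : ℕ → ℝ → ℝ} (hη : ∀ j < s,
  (fun h => 1 - η j h) =O[𝓝[>] 0] fun h => h ^ (2 * (s - j)))
  (hG : ∀ n, HasPolyApprox G n) (hc : ∀ ℓ, c ℓ ∈ Icc (0 : ℝ) 1)
  (hquad : IsExactQuadrature c b (2 * s))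

include hη hG hc hquad

lemma isBigO_damping_smul_legendreCoeff {j : ℕ} (hj : j < s) :
    (fun h => (1 - η j h) • legendreCoeff c b (G h) j) =O[𝓝[>] 0] fun h => h ^ (2 * s - j) :=
  ((hη j hj).smul ((hG j).isBigO_legendreCoeff hc hquad le_rfl (by omega))).congr_right
    fun h => by rw [smul_eq_mul, ← pow_add]; congr 1; omega

lemma isBigO_legendreField_sub :
    (fun p : ℝ × ℝ => legendreField s c b (fun j => η j p.1) (G p.1) p.2 - G p.1 p.2)
      =O[stepFilter] fun p => p.1 ^ s := by
  have hdamp := isBigO_sum_legP_smul fun j hj =>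
    (isBigO_damping_smul_legendreCoeff hη hG hc hquad hj).trans
      (isBigO_pow_pow_nhdsGT (m := s) (by omega))
  refine ((hG s).isBigO_legendreField_one_sub hc hquad |>.sub hdamp).congr_left fun p => ?_
  simp only [legendreField, sub_smul, smul_sub, Finset.sum_sub_distrib, Pi.one_apply, one_smul]
  abel

lemma isBigO_integral_legP_smul_legendreField_sub
    (hGc : ∀ᶠ h in 𝓝[>] (0 : ℝ), ContinuousOn (G h) (Icc 0 1)) {i : ℕ} (hi : i < s) :
    (fun h => ∫ x in (0 : ℝ)..1,
        legP i x • (legendreField s c b (fun j => η j h) (G h) x - G h x))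
      =O[𝓝[>] 0] fun h => h ^ (2 * s - i) := by
  have hquad_err := (hG (2 * s - i)).isBigO_legendreCoeff_sub_integral (j := i) hGc hc hquad
    (by omega)
  refine (hquad_err.sub (isBigO_damping_smul_legendreCoeff hη hG hc hquad hi)).congr'
    ?_ EventuallyEq.rfl
  filter_upwards [hGc] with h hGh
  have hfield_int : IntervalIntegrable
      (fun x => legP i x • legendreField s c b (fun j => η j h) (G h) x) volume 0 1 :=
    Continuous.intervalIntegrable (by fun_prop) _ _
  have hG_int : IntervalIntegrable (fun x => legP i x • G h x) volume 0 1 :=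
    ((continuous_legP i).continuousOn.smul hGh).intervalIntegrable_of_Icc zero_le_one
  simp only [smul_sub]
  rw [intervalIntegral.integral_sub hfield_int hG_int, integral_legP_smul_legendreField hi,
    sub_smul, one_smul]
  abel

end Damping

end UniformEstimates

section Regularity

open Set Filter Topology Asymptotics
open scoped ContDiff

variable {E F : Type*} [NormedAddCommGroup E] [NormedSpace ℝ E] [NormedAddCommGroup F]
  [NormedSpace ℝ F]

lemma taylorWithinEval_eq_vecPoly (g : ℝ → E) (n : ℕ) (S : Set ℝ) (x : ℝ) :
    taylorWithinEval g n S 0 x = vecPoly (n + 1) (fun i => taylorCoeffWithin g i S 0) x := by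
  simp only [taylor_within_apply, vecPoly, taylorCoeffWithin, sub_zero, smul_smul, mul_comm]

lemma norm_sub_vecPoly_taylorCoeffWithin_le {g : ℝ → E} {n : ℕ} {r C : ℝ}
    (hg : ContDiffOn ℝ n g (Icc 0 r))
    (hC : ∀ x ∈ Icc 0 r, ‖iteratedDerivWithin n g (Icc 0 r) x‖ ≤ C) {x : ℝ} (hx : x ∈ Icc 0 r) :
    ‖g x - vecPoly n (fun i => taylorCoeffWithin g i (Icc 0 r) 0) x‖ ≤ C * x ^ n := by
  cases n with
  | zero => simpa [vecPoly] using hC x hx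
  | succ n =>
    have hC₀ : 0 ≤ C := (norm_nonneg _).trans (hC x hx)
    have htaylor := taylor_mean_remainder_bound (hx.1.trans hx.2) hg hx hC
    rw [taylorWithinEval_eq_vecPoly, sub_zero] at htaylor
    exact htaylor.trans <| div_le_self (mul_nonneg hC₀ (pow_nonneg hx.1 _))
      (by exact_mod_cast n.factorial_pos)

lemma hasPolyApprox_of_isBigO_iteratedDerivWithin {G : ℝ → ℝ → E} {n : ℕ}
    (hG : ∀ᶠ h in 𝓝[>] (0 : ℝ), ContDiffOn ℝ n (G h) (Icc 0 1))
    (hbound : (fun p : ℝ × ℝ => iteratedDerivWithin n (G p.1) (Icc 0 1) p.2) =O[stepFilter]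
      fun p => p.1 ^ n) :
    HasPolyApprox G n := by
  obtain ⟨C, hC⟩ := isBigO_stepFilter_iff.mp hbound
  refine ⟨fun h i => taylorCoeffWithin (G h) i (Icc 0 1) 0, isBigO_stepFilter_iff.mpr ⟨C, ?_⟩⟩
  filter_upwards [hG, hC] with h hGh hCh x hx
  have hC₀ : 0 ≤ C * ‖h ^ n‖ := (norm_nonneg _).trans (hCh x hx)
  exact (norm_sub_vecPoly_taylorCoeffWithin_le hGh hCh hx).trans
    (mul_le_of_le_one_right hC₀ (pow_le_one₀ hx.1 hx.2))

lemma isBigO_iteratedDerivWithin_comp {f : E → F} {n : ℕ} (hf : ContDiff ℝ n f) {K : Set E}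
    (hK : IsCompact K) {U : ℝ → ℝ → E}
    (hUK : ∀ᶠ h in 𝓝[>] (0 : ℝ), MapsTo (U h) (Icc 0 1) K)
    (hU : ∀ᶠ h in 𝓝[>] (0 : ℝ), ContDiffOn ℝ n (U h) (Icc 0 1))
    (hderiv : ∀ i, 1 ≤ i → i ≤ n →
      (fun p : ℝ × ℝ => iteratedDerivWithin i (U p.1) (Icc 0 1) p.2) =O[stepFilter]
        fun p => p.1 ^ i) :
    (fun p : ℝ × ℝ => iteratedDerivWithin n (f ∘ U p.1) (Icc 0 1) p.2) =O[stepFilter]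
      fun p => p.1 ^ n := by
  have hf_bound (i : ℕ) (hi : i ≤ n) : ∃ M, ∀ z ∈ K, ‖iteratedFDeriv ℝ i f z‖ ≤ M :=
    hK.exists_bound_of_continuousOn
      (hf.continuous_iteratedFDeriv (by exact_mod_cast hi)).continuousOn
  choose! M hM using hf_bound
  obtain ⟨B, hB⟩ := ((Finset.range (n + 1)).image M).bddAbove
  obtain ⟨D, hD⟩ := exists_eventually_norm_le_mul_pow hderiv
  refine (isBigO_stepFilter_iff (g := fun h => h ^ n)).mpr ⟨n.factorial * B * D ^ n, ?_⟩
  filter_upwards [hUK, hU, hD, self_mem_nhdsWithin] with h hUKh hUh hDh (hpos : 0 < h) x hx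
  rw [Real.norm_of_nonneg (by positivity), mul_assoc, ← mul_pow,
    ← norm_iteratedFDerivWithin_eq_norm_iteratedDerivWithin]
  refine norm_iteratedFDerivWithin_comp_le hf.contDiffOn hUh le_rfl uniqueDiffOn_univ
    (uniqueDiffOn_Icc zero_lt_one) (mapsTo_univ _ _) hx (fun i hi => ?_) (fun i hi₁ hi₂ => ?_)
  · rw [iteratedFDerivWithin_univ]
    exact (hM i hi _ (hUKh hx)).trans
      (hB (Finset.mem_image_of_mem M (Finset.mem_range_succ_iff.mpr hi)))
  · rw [norm_iteratedFDerivWithin_eq_norm_iteratedDerivWithin]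
    exact hDh i hi₁ hi₂ x hx

lemma iteratedDerivWithin_sum_eval_smul (S : Finset ℕ) (q : ℕ → ℝ[X]) (W : ℕ → E) (n : ℕ)
    {x : ℝ} (hx : x ∈ Icc (0 : ℝ) 1) :
    iteratedDerivWithin n (fun x => ∑ j ∈ S, (q j).eval x • W j) (Icc 0 1) x
      = ∑ j ∈ S, (derivative^[n] (q j)).eval x • W j := by
  induction n generalizing q x with
  | zero => simp
  | succ n ih =>
    have hderiv : EqOn (derivWithin (fun x => ∑ j ∈ S, (q j).eval x • W j) (Icc 0 1))
        (fun x => ∑ j ∈ S, (derivative (q j)).eval x • W j) (Icc 0 1) := fun z hz =>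
      (HasDerivAt.fun_sum fun j _ => ((q j).hasDerivAt z).smul_const (W j)).hasDerivWithinAt
        |>.derivWithin (uniqueDiffOn_Icc zero_lt_one z hz)
    rw [iteratedDerivWithin_succ', iteratedDerivWithin_congr hderiv hx, ih _ hx]
    simp only [Function.iterate_succ_apply]

section Method

variable {ι : Type*} [Fintype ι] {c b : ι → ℝ} {s : ℕ} {w : ℕ → ℝ} {h : ℝ} {V : ℝ → E} {G : ℝ → E}

lemma smul_legendreField_eq_sum_eval (h x : ℝ) : h • legendreField s c b w G x
    = ∑ j ∈ Finset.range s, (legPoly j).eval x • h • w j • legendreCoeff c b G j := by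
  simp only [legendreField, Finset.smul_sum, legP_eq_eval, smul_comm h]

variable (hV : ∀ x ∈ Icc (0 : ℝ) 1,
  HasDerivWithinAt V (h • legendreField s c b w G x) (Icc 0 1) x)

include hV

lemma eqOn_derivWithin_legendreField :
    EqOn (derivWithin V (Icc 0 1)) (fun x => ∑ j ∈ Finset.range s,
      (legPoly j).eval x • h • w j • legendreCoeff c b G j) (Icc 0 1) := fun x hx => by
  rw [(hV x hx).derivWithin (uniqueDiffOn_Icc zero_lt_one x hx), smul_legendreField_eq_sum_eval]

lemma contDiffOn_of_hasDerivWithinAt_legendreField : ContDiffOn ℝ ∞ V (Icc 0 1) := by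
  refine (contDiffOn_infty_iff_derivWithin (uniqueDiffOn_Icc zero_lt_one)).mpr
    ⟨fun x hx => (hV x hx).differentiableWithinAt, ContDiffOn.congr ?_
      (eqOn_derivWithin_legendreField hV)⟩
  exact (ContDiff.sum fun j _ => ((legPoly j).contDiff_aeval ∞).smul contDiff_const).contDiffOn

lemma iteratedDerivWithin_succ_of_hasDerivWithinAt_legendreField (n : ℕ) {x : ℝ}
    (hx : x ∈ Icc (0 : ℝ) 1) :
    iteratedDerivWithin (n + 1) V (Icc 0 1) x = ∑ j ∈ Finset.range s,
      (derivative^[n] (legPoly j)).eval x • h • w j • legendreCoeff c b G j := by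
  rw [iteratedDerivWithin_succ', iteratedDerivWithin_congr (eqOn_derivWithin_legendreField hV) hx,
    iteratedDerivWithin_sum_eval_smul _ _ _ _ hx]

end Method

section Bootstrap

variable {ι : Type*} [Fintype ι] {c b : ι → ℝ} {s : ℕ} {η : ℕ → ℝ → ℝ}
  [CompleteSpace E]

lemma isBigO_one_of_one_sub {g : ℝ → ℝ} {n : ℕ}
    (hg : (fun h => 1 - g h) =O[𝓝[>] 0] fun h : ℝ => h ^ n) :
    g =O[𝓝[>] 0] fun _ => (1 : ℝ) := by
  have h₁ : (fun h => 1 - g h) =O[𝓝[>] 0] fun _ => (1 : ℝ) := by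
    simpa using hg.trans (isBigO_pow_pow_nhdsGT n.zero_le)
  simpa using (isBigO_refl (fun _ : ℝ => (1 : ℝ)) (𝓝[>] 0)).sub h₁

variable (hη : ∀ j < s, (fun h => 1 - η j h) =O[𝓝[>] 0] fun h => h ^ (2 * (s - j)))
  (hc : ∀ ℓ, c ℓ ∈ Icc (0 : ℝ) 1) (hquad : IsExactQuadrature c b (2 * s))

include hη hc hquad

lemma isBigO_iteratedDerivWithin_succ {U G : ℝ → ℝ → E} {n : ℕ} (hG : HasPolyApprox G n)
    (hU : ∀ᶠ h in 𝓝[>] (0 : ℝ), ∀ x ∈ Icc (0 : ℝ) 1, HasDerivWithinAt (U h)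
      (h • legendreField s c b (fun j => η j h) (G h) x) (Icc 0 1) x) :
    (fun p : ℝ × ℝ => iteratedDerivWithin (n + 1) (U p.1) (Icc 0 1) p.2) =O[stepFilter]
      fun p => p.1 ^ (n + 1) := by
  have hsum : (fun p : ℝ × ℝ => ∑ j ∈ Finset.range s, (derivative^[n] (legPoly j)).eval p.2 •
      p.1 • η j p.1 • legendreCoeff c b (G p.1) j) =O[stepFilter] fun p => p.1 ^ (n + 1) := by
    refine IsBigO.fun_sum fun j hj => ?_
    have hj := Finset.mem_range.mp hj
    obtain hjn | hnj := lt_or_ge j n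
    · simpa [iterate_derivative_eq_zero ((natDegree_legPoly j).trans_lt hjn)] using
        isBigO_zero _ _
    · have hcoeff : (fun h => h • η j h • legendreCoeff c b (G h) j) =O[𝓝[>] 0]
          fun h => h ^ (n + 1) := by
        simpa [pow_succ'] using (isBigO_refl (fun h : ℝ => h) (𝓝[>] 0)).smul
          ((isBigO_one_of_one_sub (hη j hj)).smul
            (hG.isBigO_legendreCoeff hc hquad hnj (by omega)))
      exact isBigO_smul_of_continuous (derivative^[n] (legPoly j)).continuous hcoeff
  refine hsum.congr' (eventually_stepFilter.mpr ?_) EventuallyEq.rfl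
  filter_upwards [hU] with h hUh x hx
  exact (iteratedDerivWithin_succ_of_hasDerivWithinAt_legendreField hUh n hx).symm

theorem hasPolyApprox_comp {f : E → E} (hf : ContDiff ℝ ∞ f) {K : Set E} (hK : IsCompact K)
    {U : ℝ → ℝ → E} (hUK : ∀ᶠ h in 𝓝[>] (0 : ℝ), MapsTo (U h) (Icc 0 1) K)
    (hU : ∀ᶠ h in 𝓝[>] (0 : ℝ), ∀ x ∈ Icc (0 : ℝ) 1, HasDerivWithinAt (U h)
      (h • legendreField s c b (fun j => η j h) (f ∘ U h) x) (Icc 0 1) x) (n : ℕ) :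
    HasPolyApprox (fun h => f ∘ U h) n := by
  induction n using Nat.strong_induction_on with
  | h n ih =>
    have hUn : ∀ᶠ h in 𝓝[>] (0 : ℝ), ContDiffOn ℝ n (U h) (Icc 0 1) := by
      filter_upwards [hU] with h hUh
      exact (contDiffOn_of_hasDerivWithinAt_legendreField hUh).of_le (by exact_mod_cast le_top)
    have hfn : ContDiff ℝ n f := hf.of_le (by exact_mod_cast le_top)
    refine hasPolyApprox_of_isBigO_iteratedDerivWithin
      (hUn.mono fun h hUh => hfn.comp_contDiffOn hUh)
      (isBigO_iteratedDerivWithin_comp hfn hK hUK hUn fun i hi₁ hi₂ => ?_)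
    obtain ⟨i, rfl⟩ := Nat.exists_eq_add_of_le' hi₁
    exact isBigO_iteratedDerivWithin_succ hη hc hquad (ih i hi₂) hU

end Bootstrap

end Regularity

section VariationOfConstants

open Set Filter Topology Asymptotics
open scoped ContDiff

variable {E F : Type*} [NormedAddCommGroup E] [NormedSpace ℝ E] [NormedAddCommGroup F]
  [NormedSpace ℝ F]

lemma isBigO_clm_apply {α : Type*} {l : Filter α} {A : α → E →L[ℝ] F} {v : α → E} {g₁ g₂ : α → ℝ}
    (hA : A =O[l] g₁) (hv : v =O[l] g₂) : (fun a => A a (v a)) =O[l] fun a => g₁ a * g₂ a :=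
  (IsBigO.of_norm_le fun a => (A a).le_opNorm (v a)).trans (hA.norm_left.mul hv.norm_left)

lemma isBigO_apply_of_tendsto_one {α : Type*} {l : Filter α} {Z : α → E →L[ℝ] E} {v : α → E}
    (hZ : Tendsto Z l (𝓝 1)) : v =O[l] fun a => Z a (v a) := by
  have hsub : (fun a => Z a - 1) =o[l] fun _ => (1 : ℝ) :=
    (isLittleO_one_iff ℝ).mpr (by simpa using hZ.sub_const 1)
  have hle : (fun a => Z a (v a) - v a) =O[l] fun a => ‖Z a - 1‖ * ‖v a‖ :=
    IsBigO.of_norm_le fun a => by simpa using (Z a - 1).le_opNorm (v a)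
  have hlittle : (fun a => ‖Z a - 1‖ * ‖v a‖) =o[l] v := by
    simpa using hsub.norm_left.mul_isBigO (isBigO_refl (fun a => ‖v a‖) l)
  exact IsEquivalent.isBigO_symm (hle.trans_isLittleO hlittle)

lemma mapsTo_mul_Icc {ε h : ℝ} (hh : h ∈ Icc 0 ε) :
    MapsTo (fun x : ℝ => x * h) (Icc 0 1) (Icc 0 ε) := fun _ hx =>
  ⟨mul_nonneg hx.1 hh.1, (mul_le_of_le_one_left hh.1 hx.2).trans hh.2⟩

lemma tendsto_mul_stepFilter {ε : ℝ} (hε : 0 < ε) :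
    Tendsto (fun p : ℝ × ℝ => p.2 * p.1) stepFilter (𝓝[Icc 0 ε] 0) := by
  have hmem : ∀ᶠ p in stepFilter, p.2 * p.1 ∈ Icc 0 p.1 ∧ p.1 ≤ ε :=
    eventually_stepFilter.mpr <| by
      filter_upwards [Ioc_mem_nhdsGT hε] with h hh x hx
      exact ⟨⟨mul_nonneg hx.1 hh.1.le, mul_le_of_le_one_left hh.1.le hx.2⟩, hh.2⟩
  have hfst : Tendsto (fun p : ℝ × ℝ => p.1) stepFilter (𝓝 0) :=
    tendsto_fst.mono_right nhdsWithin_le_nhds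
  refine tendsto_nhdsWithin_iff.mpr ⟨?_, hmem.mono fun p hp => ⟨hp.1.1, hp.1.2.trans hp.2⟩⟩
  exact tendsto_of_tendsto_of_tendsto_of_le_of_le' tendsto_const_nhds hfst
    (hmem.mono fun p hp => hp.1.1) (hmem.mono fun p hp => hp.1.2)

lemma tendsto_comp_mul_stepFilter {X : Type*} [TopologicalSpace X] {g : ℝ → X} {ε : ℝ} (hε : 0 < ε)
    (hg : ContinuousOn g (Icc 0 ε)) :
    Tendsto (fun p : ℝ × ℝ => g (p.2 * p.1)) stepFilter (𝓝 (g 0)) :=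
  (hg 0 ⟨le_rfl, hε.le⟩).tendsto.comp (tendsto_mul_stepFilter hε)

lemma isBigO_sub_vecPoly_taylorCoeffWithin {g : ℝ → E} {n : ℕ} {ε : ℝ}
    (hg : ContDiffOn ℝ n g (Icc 0 ε)) (hε : 0 < ε) :
    (fun p : ℝ × ℝ => g (p.2 * p.1)
        - vecPoly n (fun i => taylorCoeffWithin g i (Icc 0 ε) 0) (p.2 * p.1))
      =O[stepFilter] fun p => p.1 ^ n := by
  obtain ⟨C, hC⟩ := isCompact_Icc.exists_bound_of_continuousOn
    (hg.continuousOn_iteratedDerivWithin le_rfl (uniqueDiffOn_Icc hε))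
  have htaylor : (fun t => g t - vecPoly n (fun i => taylorCoeffWithin g i (Icc 0 ε) 0) t)
      =O[𝓝[Icc 0 ε] 0] fun t => t ^ n :=
    IsBigO.of_bound C <| by
      filter_upwards [self_mem_nhdsWithin] with t ht
      rw [Real.norm_of_nonneg (pow_nonneg ht.1 n)]
      exact norm_sub_vecPoly_taylorCoeffWithin_le hg hC ht
  refine (htaylor.comp_tendsto (tendsto_mul_stepFilter hε)).trans ?_
  simpa [Function.comp_def, mul_pow] using (isBigO_snd_one
    (continuous_pow n).continuousOn).mul (isBigO_refl (fun p : ℝ × ℝ => p.1 ^ n) stepFilter)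

lemma gronwallBound_zero_eq_mul (K ε x : ℝ) :
    gronwallBound 0 K ε x = ε * gronwallBound 0 K 1 x := by
  by_cases hK : K = 0
  · simp [hK, gronwallBound_K0]
  · simp only [gronwallBound_of_K_ne_0 hK]
    ring

lemma isBigO_of_norm_deriv_le {e e' : ℝ → ℝ → E} {g : ℝ → ℝ} {K C : ℝ}
    (he : ∀ᶠ h in 𝓝[>] (0 : ℝ), ∀ x ∈ Icc (0 : ℝ) 1,
      HasDerivWithinAt (e h) (e' h x) (Icc 0 1) x)
    (he₀ : ∀ᶠ h in 𝓝[>] (0 : ℝ), e h 0 = 0)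
    (hle : ∀ᶠ h in 𝓝[>] (0 : ℝ), ∀ x ∈ Icc (0 : ℝ) 1, ‖e' h x‖ ≤ K * ‖e h x‖ + C * ‖g h‖) :
    (fun p : ℝ × ℝ => e p.1 p.2) =O[stepFilter] fun p => g p.1 := by
  obtain ⟨M, hM⟩ := isCompact_Icc.exists_bound_of_continuousOn (s := Icc (0 : ℝ) 1)
    fun x _ => (hasDerivAt_gronwallBound 0 K 1 x).continuousAt.continuousWithinAt
  refine isBigO_stepFilter_iff.mpr ⟨|C| * M, ?_⟩
  filter_upwards [he, he₀, hle] with h heh he₀h hleh x hx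
  have hgronwall := norm_le_gronwallBound_of_norm_deriv_right_le (δ := 0)
    (fun z hz => (heh z hz).continuousWithinAt)
    (fun z hz => (heh z (Ico_subset_Icc_self hz)).mono_of_mem_nhdsWithin
      (Icc_mem_nhdsGE_of_mem hz))
    (by simp [he₀h]) (fun z hz => hleh z (Ico_subset_Icc_self hz)) x hx
  calc ‖e h x‖ ≤ C * ‖g h‖ * gronwallBound 0 K 1 x := by
        rwa [sub_zero, gronwallBound_zero_eq_mul] at hgronwall
    _ ≤ ‖C * ‖g h‖‖ * ‖gronwallBound 0 K 1 x‖ := by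
        rw [← norm_mul]; exact Real.le_norm_self _
    _ ≤ |C| * M * ‖g h‖ := by
        rw [norm_mul, norm_norm, Real.norm_eq_abs C, mul_right_comm]
        gcongr
        exact hM x hx

/-- The remainder at `u` of the first-order Taylor expansion of `f` about `v`: the nonlinear part of
the equation satisfied by the error `u - v`. -/
noncomputable def linearRemainder (f : E → F) (u v : E) : F := f u - f v - fderiv ℝ f v (u - v)

lemma isBigO_linearRemainder {f : E → F} {a : E} (hf : ContDiffAt ℝ 2 f a) :
    (fun p : E × E => linearRemainder f p.1 p.2) =O[𝓝 (a, a)] fun p => ‖p.1 - p.2‖ ^ 2 := by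
  obtain ⟨L, t, ht, hL⟩ := (hf.fderiv_right (m := 1) le_rfl).exists_lipschitzOnWith
  have hdiff : ∀ᶠ z in 𝓝 a, DifferentiableAt ℝ f z :=
    (hf.eventually (by simp)).mono fun z hz => hz.differentiableAt two_ne_zero
  obtain ⟨r, hr, hball⟩ := Metric.mem_nhds_iff.mp (inter_mem ht hdiff)
  refine IsBigO.of_bound L ?_
  filter_upwards [prod_mem_nhds (Metric.ball_mem_nhds a hr) (Metric.ball_mem_nhds a hr)]
    with ⟨u, v⟩ ⟨hu, hv⟩
  have hseg : segment ℝ v u ⊆ t ∩ {z | DifferentiableAt ℝ f z} :=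
    ((convex_ball a r).segment_subset hv hu).trans hball
  have hderiv : ∀ z ∈ segment ℝ v u, ‖fderiv ℝ f z - fderiv ℝ f v‖ ≤ L * ‖u - v‖ :=
    fun z hz => (hL.norm_sub_le (hseg hz).1 (hball hv).1).trans <| by
      gcongr
      exact norm_sub_le_of_mem_segment hz
  have := (convex_segment v u).norm_image_sub_le_of_norm_fderiv_le' (fun z hz => (hseg hz).2)
    hderiv (left_mem_segment ℝ v u) (right_mem_segment ℝ v u)
  simpa [linearRemainder, mul_assoc, sq] using this

lemma hasDerivWithinAt_comp_mul {g : ℝ → E} {g' : E} {ε h x : ℝ} (hh : h ∈ Icc 0 ε)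
    (hg : HasDerivWithinAt g g' (Icc 0 ε) (x * h)) :
    HasDerivWithinAt (fun x => g (x * h)) (h • g') (Icc 0 1) x :=
  hg.scomp x (by simpa using (hasDerivWithinAt_id x _).mul_const h) (mapsTo_mul_Icc hh)

lemma isBigO_integral_pow_smul {δ : ℝ → ℝ → E} {N s : ℕ}
    (hδc : ∀ᶠ h in 𝓝[>] (0 : ℝ), ContinuousOn (δ h) (Icc 0 1))
    (hmom : ∀ i < s, (fun h => ∫ x in (0 : ℝ)..1, legP i x • δ h x) =O[𝓝[>] 0]
      fun h => h ^ (N - i)) {i : ℕ} (hi : i < s) :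
    (fun h => ∫ x in (0 : ℝ)..1, x ^ i • δ h x) =O[𝓝[>] 0] fun h => h ^ (N - i) := by
  have hsum : (fun h => ∑ j ∈ Finset.range (i + 1), (∫ z in (0 : ℝ)..1, legP j z * z ^ i) •
      ∫ x in (0 : ℝ)..1, legP j x • δ h x) =O[𝓝[>] 0] fun h => h ^ (N - i) :=
    IsBigO.fun_sum fun j hj => ((hmom j (by grind)).trans
      (isBigO_pow_pow_nhdsGT (by grind))).const_smul_left _
  refine hsum.congr' ?_ EventuallyEq.rfl
  filter_upwards [hδc] with h hδh
  have hexpand (x : ℝ) : x ^ i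
      = ∑ j ∈ Finset.range (i + 1), legP j x * ∫ z in (0 : ℝ)..1, legP j z * z ^ i := by
    simpa using (sum_legP_mul_integral (s := i + 1) (q := X ^ i)
      (by rw [degree_X_pow]; exact_mod_cast i.lt_succ_self) x).symm
  have hint (j : ℕ) : IntervalIntegrable
      (fun x => (∫ z in (0 : ℝ)..1, legP j z * z ^ i) • legP j x • δ h x) volume 0 1 :=
    (((continuous_legP j).continuousOn.smul hδh).const_smul _).intervalIntegrable_of_Icc
      zero_le_one
  simp_rw [← intervalIntegral.integral_smul]
  rw [← intervalIntegral.integral_finsetSum fun j _ => hint j]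
  refine intervalIntegral.integral_congr fun x _ => ?_
  simp only [smul_smul, ← Finset.sum_smul, hexpand x, mul_comm]

variable [CompleteSpace E]

lemma exists_adjoint_resolvent {A : ℝ → E →L[ℝ] E} {T : ℝ} (hT : 0 < T)
    (hA : ContDiffOn ℝ ∞ A (Icc 0 T)) :
    ∃ ε, 0 < ε ∧ ε ≤ T ∧ ∃ Z : ℝ → E →L[ℝ] E, Z 0 = 1 ∧ ContDiffOn ℝ ∞ Z (Icc 0 ε) ∧
      ∀ t ∈ Icc 0 ε, HasDerivWithinAt Z (-(Z t).comp (A t)) (Icc 0 ε) t := by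
  obtain ⟨M, hM⟩ := isCompact_Icc.exists_bound_of_continuousOn hA.continuousOn
  have hM₀ : 0 ≤ M := (norm_nonneg _).trans (hM 0 ⟨le_rfl, hT.le⟩)
  lift M to NNReal using hM₀
  let R : NNReal := ‖(1 : E →L[ℝ] E)‖₊ + 1
  let ε : ℝ := min T ((R : ℝ) * M + 1)⁻¹
  have hε : 0 < ε := lt_min hT (by positivity)
  have hAε : ContDiffOn ℝ ∞ A (Icc 0 ε) := hA.mono (Icc_subset_Icc_right (min_le_left _ _))
  have hMε : ∀ t ∈ Icc 0 ε, ‖A t‖ ≤ M := fun t ht =>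
    hM t (Icc_subset_Icc_right (min_le_left _ _) ht)
  have hpicard : IsPicardLindelof (fun t (Z : E →L[ℝ] E) => -Z.comp (A t))
      (⟨0, left_mem_Icc.mpr hε.le⟩ : Icc 0 ε) 1 1 0 (R * M) M :=
    { lipschitzOnWith := fun t ht => LipschitzOnWith.of_dist_le_mul fun Z₁ _ Z₂ _ => by
        rw [dist_neg_neg, dist_eq_norm, ← ContinuousLinearMap.sub_comp, mul_comm, dist_eq_norm]
        exact (ContinuousLinearMap.opNorm_comp_le _ _).trans (by gcongr; exact hMε t ht)
      continuousOn := fun Z _ => (continuousOn_const.clm_comp hAε.continuousOn).neg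
      norm_le := fun t ht Z hZ => by
        have hZR : ‖Z‖ ≤ R := norm_le_of_mem_closedBall hZ
        rw [norm_neg]
        exact (ContinuousLinearMap.opNorm_comp_le _ _).trans
          (mul_le_mul hZR (hMε t ht) (norm_nonneg _) R.2)
      mul_max_le := by
        have hε_le : ε ≤ ((R : ℝ) * M + 1)⁻¹ := min_le_right _ _
        have hRM : (R : ℝ) * M * ((R : ℝ) * M + 1)⁻¹ ≤ 1 :=
          mul_inv_le_one_of_le₀ (by linarith) (by positivity)
        simpa [hε.le] using (mul_le_mul_of_nonneg_left hε_le (by positivity)).trans hRM }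
  obtain ⟨Z, hZ₀, hZ⟩ := hpicard.exists_eq_forall_mem_Icc_hasDerivWithinAt₀
  refine ⟨ε, hε, min_le_left _ _, Z, hZ₀, ?_, hZ⟩
  exact ODE.contDiffOn_enat_Icc_of_hasDerivWithinAt
    (f := fun t (Z : E →L[ℝ] E) => -Z.comp (A t)) (u := univ)
    (((contDiff_snd.contDiffOn).clm_comp (hAε.comp contDiff_fst.contDiffOn
      fun p hp => hp.1)).neg) hZ (mapsTo_univ _ _)

lemma integral_vecPoly_comp_mul_apply {v : ℝ → E} (hv : ContinuousOn v (Icc 0 1)) (n : ℕ)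
    (B : ℕ → E →L[ℝ] E) (h : ℝ) :
    ∫ x in (0 : ℝ)..1, vecPoly n B (x * h) (v x)
      = ∑ i ∈ Finset.range n, h ^ i • B i (∫ x in (0 : ℝ)..1, x ^ i • v x) := by
  have hint (i : ℕ) : IntervalIntegrable (fun x => x ^ i • v x) volume 0 1 :=
    ((continuous_pow i).continuousOn.smul hv).intervalIntegrable_of_Icc zero_le_one
  have hterm (i : ℕ) : h ^ i • B i (∫ x in (0 : ℝ)..1, x ^ i • v x)
      = ∫ x in (0 : ℝ)..1, h ^ i • B i (x ^ i • v x) := by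
    rw [intervalIntegral.integral_smul, (B i).intervalIntegral_comp_comm (hint i)]
  have hterm_int (i : ℕ) : IntervalIntegrable (fun x => h ^ i • B i (x ^ i • v x)) volume 0 1 :=
    (((B i).continuous.comp_continuousOn ((continuous_pow i).continuousOn.smul hv)).const_smul
      (h ^ i)).intervalIntegrable_of_Icc zero_le_one
  simp_rw [hterm]
  rw [← intervalIntegral.integral_finsetSum fun i _ => hterm_int i]
  refine intervalIntegral.integral_congr fun x _ => ?_
  simp only [vecPoly, _root_.sum_apply, _root_.smul_apply, map_smul, smul_smul, mul_pow, mul_comm]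

lemma isBigO_integral_apply_of_moments {Z : ℝ → E →L[ℝ] E} {ε : ℝ} (hε : 0 < ε) {s : ℕ}
    (hZ : ContDiffOn ℝ s Z (Icc 0 ε)) {δ : ℝ → ℝ → E}
    (hδc : ∀ᶠ h in 𝓝[>] (0 : ℝ), ContinuousOn (δ h) (Icc 0 1))
    (hδ : (fun p : ℝ × ℝ => δ p.1 p.2) =O[stepFilter] fun p => p.1 ^ s)
    (hmom : ∀ i < s, (fun h => ∫ x in (0 : ℝ)..1, x ^ i • δ h x) =O[𝓝[>] 0]
      fun h => h ^ (2 * s - i)) :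
    (fun h => ∫ x in (0 : ℝ)..1, Z (x * h) (δ h x)) =O[𝓝[>] 0] fun h => h ^ (2 * s) := by
  set B : ℕ → E →L[ℝ] E := fun i => taylorCoeffWithin Z i (Icc 0 ε) 0
  have hrem : (fun h => ∫ x in (0 : ℝ)..1, (Z (x * h) - vecPoly s B (x * h)) (δ h x))
      =O[𝓝[>] 0] fun h => h ^ (2 * s) :=
    isBigO_integral (F := fun p => (Z (p.2 * p.1) - vecPoly s B (p.2 * p.1)) (δ p.1 p.2)) <| by
      simpa [← pow_add, ← two_mul] using
        isBigO_clm_apply (isBigO_sub_vecPoly_taylorCoeffWithin hZ hε) hδ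
  have htaylor : (fun h => ∑ i ∈ Finset.range s, h ^ i • B i (∫ x in (0 : ℝ)..1, x ^ i • δ h x))
      =O[𝓝[>] 0] fun h => h ^ (2 * s) :=
    IsBigO.fun_sum fun i hi => ((isBigO_refl (fun h : ℝ => h ^ i) _).smul
      (((B i).isBigO_comp _ _).trans (hmom i (Finset.mem_range.mp hi)))).congr_right fun h => by
        have := Finset.mem_range.mp hi
        rw [smul_eq_mul, ← pow_add]; congr 1; omega
  refine (hrem.add htaylor).congr' ?_ EventuallyEq.rfl
  filter_upwards [hδc, Ioc_mem_nhdsGT hε] with h hδh hh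
  have hZh : ContinuousOn (fun x => Z (x * h)) (Icc 0 1) :=
    hZ.continuousOn.comp (by fun_prop) (mapsTo_mul_Icc (Ioc_subset_Icc_self hh))
  have hZ_int : IntervalIntegrable (fun x => Z (x * h) (δ h x)) volume 0 1 :=
    (hZh.clm_apply hδh).intervalIntegrable_of_Icc zero_le_one
  have hB : ContinuousOn (fun x => vecPoly s B (x * h)) (Icc 0 1) :=
    Continuous.continuousOn (by fun_prop)
  have hB_int : IntervalIntegrable (fun x => vecPoly s B (x * h) (δ h x)) volume 0 1 :=
    (hB.clm_apply hδh).intervalIntegrable_of_Icc zero_le_one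
  simp only [← integral_vecPoly_comp_mul_apply hδh, _root_.sub_apply]
  rw [intervalIntegral.integral_sub hZ_int hB_int, sub_add_cancel]

lemma adjoint_resolvent_apply_eq_integral {A Z : ℝ → E →L[ℝ] E} {ε h : ℝ} (hh : h ∈ Icc 0 ε)
    (hZ : ∀ t ∈ Icc 0 ε, HasDerivWithinAt Z (-(Z t).comp (A t)) (Icc 0 ε) t) {e ρ : ℝ → E}
    (he : ∀ x ∈ Icc (0 : ℝ) 1, HasDerivWithinAt e (h • (A (x * h) (e x) + ρ x)) (Icc 0 1) x)
    (he₀ : e 0 = 0) (hρ : ContinuousOn ρ (Icc 0 1)) :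
    Z h (e 1) = h • ∫ x in (0 : ℝ)..1, Z (x * h) (ρ x) := by
  have hderiv : ∀ x ∈ Icc (0 : ℝ) 1, HasDerivWithinAt (fun x => Z (x * h) (e x))
      (h • Z (x * h) (ρ x)) (Icc 0 1) x := fun x hx =>
    ((hasDerivWithinAt_comp_mul hh (hZ _ (mapsTo_mul_Icc hh hx))).clm_apply
      (he x hx)).congr_deriv (by simp)
  have hZh : ContinuousOn (fun x => Z (x * h)) (Icc 0 1) :=
    ContinuousOn.comp (fun t ht => (hZ t ht).continuousWithinAt) (by fun_prop) (mapsTo_mul_Icc hh)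
  have hFTC := intervalIntegral.integral_eq_sub_of_hasDerivAt_of_le zero_le_one
    (fun x hx => (hderiv x hx).continuousWithinAt)
    (fun x hx => (hderiv x (Ioo_subset_Icc_self hx)).hasDerivAt (Icc_mem_nhds hx.1 hx.2))
    (((hZh.clm_apply hρ).const_smul h).intervalIntegrable_of_Icc zero_le_one)
  simpa [he₀] using hFTC.symm

end VariationOfConstants

section Superconvergence

open Set Filter Topology Asymptotics
open scoped ContDiff

variable {E : Type*} [NormedAddCommGroup E] [NormedSpace ℝ E] {f : E → E} {T : ℝ} {y : ℝ → E}
  {U δ : ℝ → ℝ → E} {s : ℕ}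

lemma tendsto_perturbed_stepFilter {y₀ : E}
    (hU : ∀ᶠ h in 𝓝[>] (0 : ℝ), ∀ x ∈ Icc (0 : ℝ) 1,
      HasDerivWithinAt (U h) (h • (f (U h x) + δ h x)) (Icc 0 1) x)
    (hU₀ : ∀ᶠ h in 𝓝[>] (0 : ℝ), U h 0 = y₀)
    (hfield : (fun p : ℝ × ℝ => f (U p.1 p.2) + δ p.1 p.2) =O[stepFilter] fun _ => (1 : ℝ)) :
    Tendsto (fun p : ℝ × ℝ => U p.1 p.2) stepFilter (𝓝 y₀) := by
  obtain ⟨C, hC⟩ := (isBigO_stepFilter_iff (g := fun _ => 1)).mp hfield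
  have hsub : (fun p : ℝ × ℝ => U p.1 p.2 - y₀) =O[stepFilter] fun p => p.1 := by
    refine isBigO_of_norm_deriv_le (e := fun h x => U h x - y₀) (g := fun h => h)
      (K := 0) (C := C)
      (hU.mono fun h hUh x hx => (hUh x hx).sub_const y₀) (hU₀.mono fun h hU₀h => by simp [hU₀h]) ?_
    filter_upwards [hC] with h hCh x hx
    rw [zero_mul, zero_add, norm_smul, mul_comm]
    gcongr
    simpa using hCh x hx
  simpa using (hsub.trans_tendsto (tendsto_fst.mono_right nhdsWithin_le_nhds)).add_const y₀

variable (hf : ContDiff ℝ ∞ f) (hT : 0 < T)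
  (hy : ∀ t ∈ Icc 0 T, HasDerivWithinAt y (f (y t)) (Icc 0 T) t)
  (hU : ∀ᶠ h in 𝓝[>] (0 : ℝ), ∀ x ∈ Icc (0 : ℝ) 1,
    HasDerivWithinAt (U h) (h • (f (U h x) + δ h x)) (Icc 0 1) x)
  (hU₀ : ∀ᶠ h in 𝓝[>] (0 : ℝ), U h 0 = y 0)
  (hUf : (fun p : ℝ × ℝ => f (U p.1 p.2)) =O[stepFilter] fun _ => (1 : ℝ))
  (hδ : (fun p : ℝ × ℝ => δ p.1 p.2) =O[stepFilter] fun p => p.1 ^ s)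

include hT hy hU in
lemma eventually_hasDerivWithinAt_sub :
    ∀ᶠ h in 𝓝[>] (0 : ℝ), ∀ x ∈ Icc (0 : ℝ) 1, HasDerivWithinAt (fun x => U h x - y (x * h))
      (h • (f (U h x) - f (y (x * h)) + δ h x)) (Icc 0 1) x := by
  filter_upwards [hU, Ioc_mem_nhdsGT hT] with h hUh hh x hx
  have hhT := Ioc_subset_Icc_self hh
  refine ((hUh x hx).sub (hasDerivWithinAt_comp_mul hhT
    (hy _ (mapsTo_mul_Icc hhT hx)))).congr_deriv ?_
  rw [← smul_sub, sub_add_eq_add_sub]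

include hT hy hU hU₀ hUf hδ

lemma tendsto_perturbed_prodMk_solution :
    Tendsto (fun p : ℝ × ℝ => (U p.1 p.2, y (p.2 * p.1))) stepFilter (𝓝 (y 0, y 0)) := by
  have hδ₁ : (fun p : ℝ × ℝ => δ p.1 p.2) =O[stepFilter] fun _ => (1 : ℝ) := by
    simpa only [pow_zero, Function.comp_def] using
      hδ.trans ((isBigO_pow_pow_nhdsGT s.zero_le).comp_tendsto tendsto_fst)
  exact (tendsto_perturbed_stepFilter hU hU₀ (hUf.add hδ₁)).prodMk_nhds
    (tendsto_comp_mul_stepFilter hT fun t ht => (hy t ht).continuousWithinAt)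

include hf

lemma isBigO_perturbed_sub_solution :
    (fun p : ℝ × ℝ => U p.1 p.2 - y (p.2 * p.1)) =O[stepFilter] fun p => p.1 ^ (s + 1) := by
  have hlip := (hf.contDiffAt.hasStrictFDerivAt (by simp)).isBigO_sub.comp_tendsto
    (tendsto_perturbed_prodMk_solution hT hy hU hU₀ hUf hδ)
  obtain ⟨K, hK₀, hK⟩ := hlip.exists_nonneg
  obtain ⟨C, hC⟩ := (isBigO_stepFilter_iff (g := fun h => h ^ s)).mp hδ
  refine isBigO_of_norm_deriv_le (e := fun h x => U h x - y (x * h)) (g := fun h => h ^ (s + 1))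
    (K := K) (C := C) (eventually_hasDerivWithinAt_sub hT hy hU)
    (hU₀.mono fun h hU₀h => by simp [hU₀h]) ?_
  filter_upwards [eventually_stepFilter.mp hK.bound, hC, Ioc_mem_nhdsGT zero_lt_one]
    with h hKh hCh hh x hx
  have hh₀ : 0 ≤ h := hh.1.le
  calc ‖h • (f (U h x) - f (y (x * h)) + δ h x)‖
      ≤ h * (K * ‖U h x - y (x * h)‖ + C * ‖h ^ s‖) := by
        rw [norm_smul, Real.norm_of_nonneg hh₀]
        gcongr
        exact (norm_add_le _ _).trans (add_le_add (hKh x hx) (hCh x hx))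
    _ = h * (K * ‖U h x - y (x * h)‖) + C * ‖h ^ (s + 1)‖ := by
        rw [pow_succ, norm_mul, Real.norm_of_nonneg hh₀]; ring
    _ ≤ K * ‖U h x - y (x * h)‖ + C * ‖h ^ (s + 1)‖ := by
        linarith [mul_le_of_le_one_left (mul_nonneg hK₀ (norm_nonneg (U h x - y (x * h)))) hh.2]

lemma isBigO_linearRemainder_perturbed :
    (fun p : ℝ × ℝ => linearRemainder f (U p.1 p.2) (y (p.2 * p.1))) =O[stepFilter]
      fun p => p.1 ^ (2 * s) := by
  have hquadratic := (isBigO_linearRemainder (hf.contDiffAt.of_le ENat.LEInfty.out)).comp_tendsto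
    (tendsto_perturbed_prodMk_solution hT hy hU hU₀ hUf hδ)
  have herr := (isBigO_perturbed_sub_solution hf hT hy hU hU₀ hUf hδ).norm_left.pow 2
  have hpow := (isBigO_pow_pow_nhdsGT (m := 2 * s) (n := 2 * s + 2) (by omega)).comp_tendsto
    (tendsto_fst (f := 𝓝[>] (0 : ℝ)) (g := 𝓟 (Icc (0 : ℝ) 1)))
  exact hquadratic.trans <| herr.trans <| hpow.congr_left fun p => by
    rw [Function.comp_apply, ← pow_mul]; ring

omit hU₀ hUf hδ
variable [CompleteSpace E]

include hU₀ in
lemma eventually_adjoint_resolvent_apply_sub_eq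
    (hδc : ∀ᶠ h in 𝓝[>] (0 : ℝ), ContinuousOn (δ h) (Icc 0 1)) {Z : ℝ → E →L[ℝ] E} {ε : ℝ}
    (hε : 0 < ε) (hεT : ε ≤ T)
    (hZ : ∀ t ∈ Icc 0 ε, HasDerivWithinAt Z (-(Z t).comp (fderiv ℝ f (y t))) (Icc 0 ε) t) :
    ∀ᶠ h in 𝓝[>] (0 : ℝ), Z h (U h 1 - y h)
      = h • ((∫ x in (0 : ℝ)..1, Z (x * h) (linearRemainder f (U h x) (y (x * h))))
        + ∫ x in (0 : ℝ)..1, Z (x * h) (δ h x)) := by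
  filter_upwards [hU, hU₀, eventually_hasDerivWithinAt_sub hT hy hU, hδc, Ioc_mem_nhdsGT hε]
    with h hUh hU₀h herr hδh hh
  have hhε : h ∈ Icc 0 ε := Ioc_subset_Icc_self hh
  have hZc : ContinuousOn (fun x => Z (x * h)) (Icc 0 1) :=
    ContinuousOn.comp (fun t ht => (hZ t ht).continuousWithinAt) (by fun_prop)
      (mapsTo_mul_Icc hhε)
  have hyc : ContinuousOn (fun x => y (x * h)) (Icc 0 1) :=
    ContinuousOn.comp (fun t ht => (hy t ht).continuousWithinAt) (by fun_prop)
      (mapsTo_mul_Icc ⟨hhε.1, hhε.2.trans hεT⟩)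
  have hUc : ContinuousOn (U h) (Icc 0 1) := fun x hx => (hUh x hx).continuousWithinAt
  have hrc : ContinuousOn (fun x => linearRemainder f (U h x) (y (x * h))) (Icc 0 1) :=
    ((hf.continuous.comp_continuousOn hUc).sub (hf.continuous.comp_continuousOn hyc)).sub
      (((hf.continuous_fderiv (by simp)).comp_continuousOn hyc).clm_apply (hUc.sub hyc))
  have hvoc := adjoint_resolvent_apply_eq_integral hhε hZ
    (ρ := fun x => linearRemainder f (U h x) (y (x * h)) + δ h x)
    (fun x hx => (herr x hx).congr_deriv (by simp only [linearRemainder]; congr 1; abel))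
    (by simp [hU₀h]) (hrc.add hδh)
  simp only [map_add, one_mul] at hvoc
  rwa [intervalIntegral.integral_add
    ((hZc.clm_apply hrc).intervalIntegrable_of_Icc zero_le_one)
    ((hZc.clm_apply hδh).intervalIntegrable_of_Icc zero_le_one)] at hvoc

include hU₀ hUf hδ in
theorem isBigO_perturbed_sub_solution_of_moments
    (hδc : ∀ᶠ h in 𝓝[>] (0 : ℝ), ContinuousOn (δ h) (Icc 0 1))
    (hmom : ∀ i < s, (fun h => ∫ x in (0 : ℝ)..1, legP i x • δ h x) =O[𝓝[>] 0]
      fun h => h ^ (2 * s - i)) :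
    (fun h => U h 1 - y h) =O[𝓝[>] 0] fun h => h ^ (2 * s + 1) := by
  have hy_smooth : ContDiffOn ℝ ∞ y (Icc 0 T) :=
    ODE.contDiffOn_enat_Icc_of_hasDerivWithinAt (f := fun _ => f) (u := univ)
      (hf.comp contDiff_snd).contDiffOn hy (mapsTo_univ _ _)
  obtain ⟨ε, hε, hεT, Z, hZ₀, hZ_smooth, hZ⟩ := exists_adjoint_resolvent hT
    ((hf.fderiv_right (m := ∞) le_rfl).comp_contDiffOn hy_smooth)
  have hZ_tendsto : Tendsto (fun p : ℝ × ℝ => Z (p.2 * p.1)) stepFilter (𝓝 1) :=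
    hZ₀ ▸ tendsto_comp_mul_stepFilter hε hZ_smooth.continuousOn
  have hZr : (fun h => ∫ x in (0 : ℝ)..1, Z (x * h) (linearRemainder f (U h x) (y (x * h))))
      =O[𝓝[>] 0] fun h => h ^ (2 * s) := by
    have := isBigO_clm_apply (hZ_tendsto.isBigO_one ℝ)
      (isBigO_linearRemainder_perturbed hf hT hy hU hU₀ hUf hδ)
    simp only [one_mul] at this
    exact isBigO_integral this
  have hZδ : (fun h => ∫ x in (0 : ℝ)..1, Z (x * h) (δ h x)) =O[𝓝[>] 0] fun h => h ^ (2 * s) :=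
    isBigO_integral_apply_of_moments hε (hZ_smooth.of_le (by exact_mod_cast le_top)) hδc hδ
      fun i hi => isBigO_integral_pow_smul hδc hmom hi
  have hZe : (fun h => Z h (U h 1 - y h)) =O[𝓝[>] 0] fun h => h ^ (2 * s + 1) := by
    refine IsBigO.congr' ?_ (EventuallyEq.symm
      (eventually_adjoint_resolvent_apply_sub_eq hf hT hy hU hU₀ hδc hε hεT hZ)) .rfl
    simpa [pow_succ'] using (isBigO_refl (fun h : ℝ => h) (𝓝[>] 0)).smul (hZr.add hZδ)
  have hZ_one : Tendsto Z (𝓝[>] 0) (𝓝 1) := by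
    simpa [Function.comp_def] using
      hZ_tendsto.comp (tendsto_prodMk_stepFilter (right_mem_Icc.mpr zero_le_one))
  exact (isBigO_apply_of_tendsto_one hZ_one).trans hZe

end Superconvergence

section Order

open Set Filter Topology Asymptotics
open scoped ContDiff

theorem stmt16_general {E : Type*} [NormedAddCommGroup E] [NormedSpace ℝ E] [CompleteSpace E]
    {f : E → E} (hf : ContDiff ℝ ∞ f) {T : ℝ} (hT : 0 < T) {y : ℝ → E}
    (hy : ∀ t ∈ Icc 0 T, HasDerivWithinAt y (f (y t)) (Icc 0 T) t)
    {ι : Type*} [Fintype ι] {c b : ι → ℝ} {s : ℕ} (hc : ∀ ℓ, c ℓ ∈ Icc (0 : ℝ) 1)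
    (hquad : IsExactQuadrature c b (2 * s)) {η : ℕ → ℝ → ℝ}
    (hη : ∀ j < s, (fun h => 1 - η j h) =O[𝓝[>] 0] fun h => h ^ (2 * (s - j)))
    {u : ℝ → ℝ → E} (hu₀ : ∀ᶠ h in 𝓝[>] (0 : ℝ), u h 0 = y 0) {K : Set E} (hK : IsCompact K)
    (huK : ∀ᶠ h in 𝓝[>] (0 : ℝ), MapsTo (u h) (Icc 0 h) K)
    (hu : ∀ᶠ h in 𝓝[>] (0 : ℝ), ∀ x ∈ Icc (0 : ℝ) 1, HasDerivWithinAt (u h)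
      (legendreField s c b (fun j => η j h) (fun x => f (u h (x * h))) x) (Icc 0 h) (x * h)) :
    (fun h => u h h - y h) =O[𝓝[>] 0] fun h => h ^ (2 * s + 1) := by
  set U : ℝ → ℝ → E := fun h x => u h (x * h)
  set δ : ℝ → ℝ → E := fun h x => legendreField s c b (fun j => η j h) (f ∘ U h) x - f (U h x)
  have hU : ∀ᶠ h in 𝓝[>] (0 : ℝ), ∀ x ∈ Icc (0 : ℝ) 1, HasDerivWithinAt (U h)
      (h • legendreField s c b (fun j => η j h) (f ∘ U h) x) (Icc 0 1) x := by
    filter_upwards [hu, self_mem_nhdsWithin] with h huh (hpos : 0 < h) x hx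
    exact hasDerivWithinAt_comp_mul (right_mem_Icc.mpr hpos.le) (huh x hx)
  have hUK : ∀ᶠ h in 𝓝[>] (0 : ℝ), MapsTo (U h) (Icc 0 1) K := by
    filter_upwards [huK, self_mem_nhdsWithin] with h huKh (hpos : 0 < h)
    exact huKh.comp (mapsTo_mul_Icc (right_mem_Icc.mpr hpos.le))
  have hfUc : ∀ᶠ h in 𝓝[>] (0 : ℝ), ContinuousOn (f ∘ U h) (Icc 0 1) := hU.mono fun h hUh =>
    hf.continuous.comp_continuousOn fun x hx => (hUh x hx).continuousWithinAt
  have hfU : (fun p : ℝ × ℝ => f (U p.1 p.2)) =O[stepFilter] fun _ => (1 : ℝ) := by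
    obtain ⟨M, hM⟩ := hK.exists_bound_of_continuousOn hf.continuous.continuousOn
    exact .of_bound M (eventually_stepFilter.mpr <|
      hUK.mono fun h hUKh x hx => by simpa using hM _ (hUKh hx))
  have happrox := hasPolyApprox_comp hη hc hquad hf hK hUK hU
  have hδ := isBigO_legendreField_sub hη happrox hc hquad
  simpa [U] using isBigO_perturbed_sub_solution_of_moments (U := U) (δ := δ) hf hT hy
    (by simpa [δ] using hU) (by simpa [U] using hu₀) hfU hδ
    (hfUc.mono fun h hfUh => (continuous_legendreField ..).continuousOn.sub hfUh)
    fun i hi => isBigO_integral_legP_smul_legendreField_sub hη happrox hc hquad hfUc hi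

lemma isBigO_pow_nhdsGT_iff {E : Type*} [NormedAddCommGroup E] {g : ℝ → E} {n : ℕ} :
    (g =O[𝓝[>] 0] fun h => h ^ n) ↔
      ∃ C > 0, ∃ h₁ > 0, ∀ h, 0 < h → h ≤ h₁ → ‖g h‖ ≤ C * h ^ n := by
  constructor
  · intro hg
    obtain ⟨C, hC, hgC⟩ := hg.exists_pos
    obtain ⟨h₁, hh₁, hsub⟩ := mem_nhdsGT_iff_exists_Ioc_subset.mp hgC.bound
    refine ⟨C, hC, h₁, hh₁, fun h hpos hle => ?_⟩
    have hgh : ‖g h‖ ≤ C * ‖h ^ n‖ := hsub ⟨hpos, hle⟩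
    rwa [Real.norm_of_nonneg (by positivity)] at hgh
  · rintro ⟨C, -, h₁, hh₁, hg⟩
    refine .of_bound C ?_
    filter_upwards [Ioc_mem_nhdsGT hh₁] with h hh
    simpa [abs_of_pos hh.1] using hg h hh.1 hh.2

lemma isBigO_one_sub_of_eq_one_sub_pow_mul {r s : ℕ} {α η : ℕ → ℝ → ℝ}
    (hα : ∀ j, r ≤ j → j < s → α j =O[𝓝[>] 0] fun h => h ^ 2)
    (hη₁ : ∀ j < r, ∀ h, η j h = 1)
    (hη₂ : ∀ j, r ≤ j → j < s → ∀ h, η j h = 1 - h ^ (2 * (s - 1 - j)) * α j h) :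
    ∀ j < s, (fun h => 1 - η j h) =O[𝓝[>] 0] fun h => h ^ (2 * (s - j)) := by
  intro j hj
  obtain hjr | hrj := lt_or_ge j r
  · simpa [hη₁ j hjr] using isBigO_zero _ _
  · exact ((isBigO_refl (fun h : ℝ => h ^ (2 * (s - 1 - j))) _).mul (hα j hrj hj)).congr
      (fun h => by rw [hη₂ j hrj hj, sub_sub_cancel]) fun h => by rw [← pow_add]; congr 1; omega

lemma contDiff_toEuclideanLin_gradient {n : Type*} [Fintype n] [DecidableEq n]
    (A : Matrix n n ℝ) {H : EuclideanSpace ℝ n → ℝ} (hH : ContDiff ℝ ∞ H) :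
    ContDiff ℝ ∞ fun z => toEuclideanLin A (gradient H z) := by
  have hgrad : ContDiff ℝ ∞ (gradient H) :=
    (InnerProductSpace.toDual ℝ (EuclideanSpace ℝ n)).symm.toContinuousLinearEquiv.contDiff.comp
      (hH.fderiv_right le_rfl)
  exact (toEuclideanLin A).toContinuousLinearMap.contDiff.comp hgrad

end Order

/-- Theorem 5 of the paper.  Let `y` solve `y' = J∇H(y)`, `y(0) = y₀`,
and for `h ∈ (0,h₀]` let `u_h ∈ Π_s` with `u_h(0) = y₀` and range in a fixed compact set
satisfy `u_h'(ch) = ∑_{j<s} P_j(c) η̂_j(h) γ̂_j(h)` with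
`γ̂_j(h) = ∑_ℓ b_ℓ P_j(c_ℓ) J∇H(u_h(c_ℓ h))` (quadrature exact on `Π_{2k-1}`, `k ≥ s`),
`η̂_j(h) = 1` for `j ≤ s-ν-1` and `η̂_j(h) = 1 - h^{2(s-1-j)} α̂_j(h)` with
`α̂_j(h) = O(h²)` otherwise.  Then `‖u_h(h) - y(h)‖ = O(h^{2s+1})`: the method has order
`2s`. -/
theorem stmt16 (m : ℕ) (hm : 1 ≤ m)
    (H : ESp m → ℝ) (hH : ContDiff ℝ (⊤ : ℕ∞) H)
    (h₀ : ℝ) (hh₀ : 0 < h₀)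
    (y₀ : ESp m) (y : ℝ → ESp m) (hy0 : y 0 = y₀)
    (hy : ∀ t ∈ Set.Icc 0 h₀,
      HasDerivAt y (Matrix.toEuclideanLin (Jmat m) (gradient H (y t))) t)
    (s ν k : ℕ) (hν : 1 ≤ ν) (hνs : ν < s) (hk : s ≤ k)
    (c b : Fin k → ℝ) (hc : ∀ ℓ, c ℓ ∈ Set.Icc (0:ℝ) 1)
    (hquad : ∀ q : Polynomial ℝ, q.natDegree ≤ 2 * k - 1 →
      ∑ ℓ, b ℓ * q.eval (c ℓ) = ∫ x in (0:ℝ)..1, q.eval x)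
    (u : ℝ → ℝ → ESp m)
    (hu0 : ∀ h ∈ Set.Ioc (0:ℝ) h₀, u h 0 = y₀)
    (hupoly : ∀ h ∈ Set.Ioc (0:ℝ) h₀,
      ∃ a : Fin (s + 1) → ESp m, ∀ t : ℝ, u h t = ∑ i : Fin (s + 1), t ^ (i : ℕ) • a i)
    (K : Set (ESp m)) (hK : IsCompact K)
    (huK : ∀ h ∈ Set.Ioc (0:ℝ) h₀, ∀ t ∈ Set.Icc 0 h, u h t ∈ K)
    (α : ℕ → ℝ → ℝ)
    (hα : ∀ j, s - ν ≤ j → j ≤ s - 1 →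
      ∃ C > (0:ℝ), ∃ h₁ > (0:ℝ), ∀ h : ℝ, 0 < h → h ≤ h₁ → |α j h| ≤ C * h ^ 2)
    (η : ℕ → ℝ → ℝ)
    (hη₁ : ∀ j, j ≤ s - ν - 1 → ∀ h : ℝ, η j h = 1)
    (hη₂ : ∀ j, s - ν ≤ j → j ≤ s - 1 → ∀ h : ℝ,
      η j h = 1 - h ^ (2 * (s - 1 - j)) * α j h)
    (hu' : ∀ h ∈ Set.Ioc (0:ℝ) h₀, ∀ cc ∈ Set.Icc (0:ℝ) 1,
      HasDerivAt (u h)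
        (∑ j ∈ Finset.range s, legP j cc •
          (η j h • ∑ ℓ, (b ℓ * legP j (c ℓ)) •
            Matrix.toEuclideanLin (Jmat m) (gradient H (u h (c ℓ * h)))))
        (cc * h)) :
    ∃ C > (0:ℝ), ∃ h₁ > (0:ℝ), ∀ h : ℝ, 0 < h → h ≤ min h₀ h₁ →
      ‖u h h - y h‖ ≤ C * h ^ (2 * s + 1) := by
  have hη := isBigO_one_sub_of_eq_one_sub_pow_mul
    (fun j hνj hjs => isBigO_pow_nhdsGT_iff.mpr (hα j hνj (by omega)))
    (fun j hj => hη₁ j (by omega)) (fun j hνj hjs => hη₂ j hνj (by omega))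
  have hstep := Ioc_mem_nhdsGT hh₀
  obtain ⟨C, hC, h₁, hh₁, hle⟩ := isBigO_pow_nhdsGT_iff.mp <|
    stmt16_general (contDiff_toEuclideanLin_gradient (Jmat m) hH) hh₀
      (fun t ht => (hy t ht).hasDerivWithinAt) hc (fun q hq => hquad q (by omega)) hη
      (Filter.mem_of_superset hstep fun h hh => (hu0 h hh).trans hy0.symm) hK
      (Filter.mem_of_superset hstep huK)
      (Filter.mem_of_superset hstep fun h hh x hx => (hu' h hh x hx).hasDerivWithinAt)
  exact ⟨C, hC, h₁, hh₁, fun h hpos hh => hle h hpos (hh.trans (min_le_right _ _))⟩
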